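/- Let S be a G-nilpotent (resp. G-solvable) factorizable inverse monoid with zero, with group of units G, of G-nilpotent length n (resp. G-solvable length n), whose natural connection θ is a dual isomorphism from the semilattice of idempotents onto a sublattice of L(G). Then G is a nilpotent group of nilpotency class at most n (resp. a solvable group of derived length at most n). -/

import Mathlib

/-- An inverse monoid: a monoid in which every element `a` has an inverse `a⁻¹`
satisfying `a * a⁻¹ * a = a` and `a⁻¹ * a * a⁻¹ = a⁻¹`, and this inverse is unique. -/
class InverseMonoid (S : Type*) extends Monoid S, Inv S where
  mul_inv_mul : ∀ a : S, a * a⁻¹ * a = a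
  inv_mul_inv : ∀ a : S, a⁻¹ * a * a⁻¹ = a⁻¹
  inv_unique : ∀ a b : S, a * b * a = a → b * a * b = b → b = a⁻¹

/-- An inverse monoid with a (two-sided absorbing) zero element. -/
class InverseMonoidWithZero (S : Type*) extends InverseMonoid S, Zero S where
  zero_mul : ∀ a : S, 0 * a = 0
  mul_zero : ∀ a : S, a * 0 = 0

/-- The natural partial order on an inverse monoid: `a ≤ b` iff `a = e * b`
for some idempotent `e`. -/
def NatLe {S : Type*} [Monoid S] (a b : S) : Prop :=
  ∃ e : S, IsIdempotentElem e ∧ a = e * b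

/-- The filter `e↑ = {s | e ≤ s}` generated by `e`. -/
def upfilter {S : Type*} [Monoid S] (e : S) : Set S := {s | NatLe e s}

/-- `c` is central in (a subset) `T`: it belongs to `T` and commutes with all elements of `T`. -/
def CentralIn {S : Type*} [Mul S] (T : Set S) (c : S) : Prop :=
  c ∈ T ∧ ∀ s ∈ T, c * s = s * c

/-- A monoid is factorizable if every element is a product of an idempotent and a unit. -/
def Factorizable (S : Type*) [Monoid S] : Prop :=
  ∀ s : S, ∃ e g : S, IsIdempotentElem e ∧ IsUnit g ∧ s = e * g

/-- The natural connection `θ`: for an (idempotent) `e`, the subgroup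
`eθ = {g ∈ G : e * g = e}` of the group of units. -/
def natconn {S : Type*} [Monoid S] (e : S) : Subgroup Sˣ where
  carrier := {g : Sˣ | e * (g : S) = e}
  one_mem' := by simp
  mul_mem' := by
    intro a b ha hb
    simp only [Set.mem_setOf_eq, Units.val_mul] at *
    rw [← mul_assoc, ha, hb]
  inv_mem' := by
    intro a ha
    simp only [Set.mem_setOf_eq] at *
    nth_rewrite 1 [← ha]
    rw [mul_assoc, ← Units.val_mul, mul_inv_cancel, Units.val_one, mul_one]

/-- The natural connection is a dual isomorphism from the idempotents onto a
sublattice of the lattice of subgroups of the group of units: it is injective on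
idempotents, order-reversing in both directions, and its image is closed under
joins and meets of subgroups. -/
def NatconnDualIso (S : Type*) [Monoid S] : Prop :=
  (∀ e f : S, IsIdempotentElem e → IsIdempotentElem f → natconn e = natconn f → e = f) ∧
  (∀ e f : S, IsIdempotentElem e → IsIdempotentElem f →
    (NatLe e f ↔ natconn f ≤ natconn e)) ∧
  (∀ e f : S, IsIdempotentElem e → IsIdempotentElem f →
    (∃ h : S, IsIdempotentElem h ∧ natconn h = natconn e ⊔ natconn f) ∧
    (∃ h : S, IsIdempotentElem h ∧ natconn h = natconn e ⊓ natconn f))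

/-- `j` is the join (least upper bound) of `e` and `f` with respect to the natural order. -/
def IsNatJoin {S : Type*} [Monoid S] (e f j : S) : Prop :=
  NatLe e j ∧ NatLe f j ∧ ∀ x : S, NatLe e x → NatLe f x → NatLe j x

/-- `F_{e,f} = f · e↑`. -/
def Fef {S : Type*} [Monoid S] (e f : S) : Set S := (f * ·) '' upfilter e

/-- `UF_{e,f}`: the group of units of the monoid `F_{e,f}` (whose identity is `f`). -/
def UFef {S : Type*} [Monoid S] (e f : S) : Set S :=
  {x ∈ Fef e f | ∃ y ∈ Fef e f, x * y = f ∧ y * x = f}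

/-- The centre of a subset `T`. -/
def ZIn {S : Type*} [Mul S] (T : Set S) : Set S := {x ∈ T | ∀ y ∈ T, x * y = y * x}

/-- Two subsets are isomorphic as semigroups (with the induced multiplication). -/
def SubIso {S : Type*} [Mul S] (A B : Set S) : Prop :=
  ∃ φ : S → S, Set.BijOn φ A B ∧ ∀ a ∈ A, ∀ b ∈ A, φ (a * b) = φ a * φ b

/-- A subcentral idempotent series between `0` and `a`. -/
def IsSubcentralSeriesBetween {S : Type*} [Monoid S] [Zero S] (n : ℕ) (c : ℕ → S) (a : S) :
    Prop :=
  c 0 = 0 ∧ c n = a ∧ (∀ i ≤ n, IsIdempotentElem (c i)) ∧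
    ∀ i < n, CentralIn (upfilter (c i)) (c (i + 1))

/-- A subcentral idempotent series of `S` (between `0` and `1`). -/
def IsSubcentralSeries {S : Type*} [Monoid S] [Zero S] (n : ℕ) (c : ℕ → S) : Prop :=
  IsSubcentralSeriesBetween n c 1

/-- A central idempotent series of `S`. -/
def IsCentralSeries {S : Type*} [Monoid S] [Zero S] (n : ℕ) (c : ℕ → S) : Prop :=
  c 0 = 0 ∧ c n = 1 ∧ (∀ i ≤ n, IsIdempotentElem (c i)) ∧
    (∀ i < n, NatLe (c i) (c (i + 1))) ∧
    ∀ i < n, CentralIn Set.univ (c (i + 1))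

/-- A subcentral idempotent: one occurring in some subcentral idempotent series of `S`. -/
def IsSubcentralIdem {S : Type*} [Monoid S] [Zero S] (e : S) : Prop :=
  ∃ (n : ℕ) (c : ℕ → S), IsSubcentralSeries n c ∧ ∃ i ≤ n, c i = e

/-- A `G`-nilpotent series: a chain of central idempotents from `0` to `1` with
`F_{eᵢ,eᵢ₊₁} ⊆ Z(F_{0,eᵢ₊₁})`. -/
def GNilpotentSeries {S : Type*} [Monoid S] [Zero S] (n : ℕ) (c : ℕ → S) : Prop :=
  c 0 = 0 ∧ c n = 1 ∧ (∀ i ≤ n, IsIdempotentElem (c i) ∧ CentralIn Set.univ (c i)) ∧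
    (∀ i < n, NatLe (c i) (c (i + 1))) ∧
    ∀ i < n, Fef (c i) (c (i + 1)) ⊆ ZIn (Fef 0 (c (i + 1)))

/-- A `G`-solvable series: a chain of central idempotents from `0` to `1` with
each `F_{eᵢ,eᵢ₊₁}` commutative. -/
def GSolvableSeries {S : Type*} [Monoid S] [Zero S] (n : ℕ) (c : ℕ → S) : Prop :=
  c 0 = 0 ∧ c n = 1 ∧ (∀ i ≤ n, IsIdempotentElem (c i) ∧ CentralIn Set.univ (c i)) ∧
    (∀ i < n, NatLe (c i) (c (i + 1))) ∧
    ∀ i < n, ∀ x ∈ Fef (c i) (c (i + 1)), ∀ y ∈ Fef (c i) (c (i + 1)), x * y = y * x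

/-- `S` is `G`-nilpotent. -/
def GNilpotent (S : Type*) [Monoid S] [Zero S] : Prop :=
  ∃ (n : ℕ) (c : ℕ → S), GNilpotentSeries n c

/-- `S` is `G`-solvable. -/
def GSolvable (S : Type*) [Monoid S] [Zero S] : Prop :=
  ∃ (n : ℕ) (c : ℕ → S), GSolvableSeries n c

/-- Two idempotent series are isomorphic: same length, and a one-to-one correspondence
between their factors under which corresponding factors are isomorphic. -/
def SeriesIso {S : Type*} [Monoid S] (n : ℕ) (c : ℕ → S) (n' : ℕ) (d : ℕ → S) : Prop :=
  n = n' ∧ ∃ σ : ℕ → ℕ, Set.BijOn σ {i | i < n} {i | i < n'} ∧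
    ∀ i < n, SubIso (Fef (c i) (c (i + 1))) (Fef (d (σ i)) (d (σ i + 1)))

/-- A composition series (for a kind `P` of series): it has no repeated terms, and any
refinement of it (of the same kind) only repeats its terms. -/
def IsCompositionOf {S : Type*} (P : ℕ → (ℕ → S) → Prop) (n : ℕ) (c : ℕ → S) : Prop :=
  P n c ∧ (∀ i ≤ n, ∀ j ≤ n, c i = c j → i = j) ∧
    ∀ (m : ℕ) (d : ℕ → S), P m d → (∀ i ≤ n, ∃ j ≤ m, d j = c i) →
      ∀ j ≤ m, ∃ i ≤ n, d j = c i

/-!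
For a central idempotent `f`, the map `g ↦ f * g` on units is multiplicative with kernel
`natconn f`, so two units have their commutator in `natconn f` as soon as their multiples by `f`
commute. If `e` is idempotent, then `f * g ∈ Fef e f` for every `g ∈ natconn e`. Hence commutation
conditions on the factors of a series `0 = c 0 ≤ ⋯ ≤ c n = 1` become commutator conditions on the
chain of subgroups `⊤ = natconn (c 0) ≥ ⋯ ≥ natconn (c n) = ⊥`: read backwards, this chain is an
ascending central series in the `G`-nilpotent case, and it dominates the derived series in the
`G`-solvable case.
-/

theorem derivedSeries_le_of_commutator_le {G : Type*} [Group G] {n : ℕ} {H : ℕ → Subgroup G}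
    (h_zero : H 0 = ⊤) (h_succ : ∀ i < n, ⁅H i, H i⁆ ≤ H (i + 1)) : derivedSeries G n ≤ H n := by
  induction n with
  | zero => exact h_zero ▸ le_top
  | succ n ih =>
    have ih : derivedSeries G n ≤ H n := ih fun i hi => h_succ i (hi.trans n.lt_succ_self)
    exact (Subgroup.commutator_mono ih ih).trans (h_succ n n.lt_succ_self)

section Monoid

open scoped commutatorElement

variable {M : Type*} [Monoid M]

theorem mem_natconn {e : M} {g : Mˣ} : g ∈ natconn e ↔ e * g = e :=
  Iff.rfl

theorem natconn_one : natconn (1 : M) = ⊥ := by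
  ext g
  rw [mem_natconn, one_mul, Units.val_eq_one, Subgroup.mem_bot]

theorem mul_inv_mem_natconn_iff {e : M} {g h : Mˣ} : g * h⁻¹ ∈ natconn e ↔ e * g = e * h := by
  rw [mem_natconn, Units.val_mul, ← mul_assoc, Units.mul_inv_eq_iff_eq_mul]

theorem mul_mem_Fef {e : M} (he : IsIdempotentElem e) (f : M) {g : Mˣ} (hg : g ∈ natconn e) :
    f * g ∈ Fef e f :=
  ⟨g, ⟨e, he, (mem_natconn.mp hg).symm⟩, rfl⟩

theorem mul_mul_mul_eq_of_central_idem {f : M} (hf : IsIdempotentElem f)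
    (hfc : CentralIn Set.univ f) (a b : M) : f * a * (f * b) = f * (a * b) := by
  have hfa : Commute f a := hfc.2 a (Set.mem_univ a)
  rw [hfa.symm.mul_mul_mul_comm, hf.eq]

theorem commutatorElement_mem_natconn {f : M} (hf : IsIdempotentElem f)
    (hfc : CentralIn Set.univ f) {g h : Mˣ} (hgh : Commute (f * g : M) (f * h)) :
    ⁅g, h⁆ ∈ natconn f := by
  have hcomm : ⁅g, h⁆ = g * h * (h * g)⁻¹ := by
    rw [commutatorElement_def, mul_inv_rev, mul_assoc (g * h)]
  rw [hcomm, mul_inv_mem_natconn_iff, Units.val_mul, Units.val_mul,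
    ← mul_mul_mul_eq_of_central_idem hf hfc, hgh.eq, mul_mul_mul_eq_of_central_idem hf hfc]

theorem commutator_natconn_le {e e' f : M} (he : IsIdempotentElem e) (he' : IsIdempotentElem e')
    (hf : IsIdempotentElem f) (hfc : CentralIn Set.univ f)
    (hcomm : ∀ x ∈ Fef e f, ∀ y ∈ Fef e' f, x * y = y * x) :
    ⁅natconn e, natconn e'⁆ ≤ natconn f :=
  Subgroup.commutator_le.mpr fun _ hg _ hh =>
    commutatorElement_mem_natconn hf hfc (hcomm _ (mul_mem_Fef he f hg) _ (mul_mem_Fef he' f hh))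

theorem GSolvableSeries.commutator_natconn_self_le [Zero M] {n : ℕ} {c : ℕ → M}
    (hc : GSolvableSeries n c) {i : ℕ} (hi : i < n) :
    ⁅natconn (c i), natconn (c i)⁆ ≤ natconn (c (i + 1)) := by
  obtain ⟨-, -, h_idem, -, h_comm⟩ := hc
  obtain ⟨h_succ_idem, h_succ_central⟩ := h_idem (i + 1) hi
  exact commutator_natconn_le (h_idem i hi.le).1 (h_idem i hi.le).1 h_succ_idem
    h_succ_central (h_comm i hi)

end Monoid

section MonoidWithZero

open scoped commutatorElement

variable {M : Type*} [MonoidWithZero M] {n : ℕ} {c : ℕ → M}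

theorem natconn_zero : natconn (0 : M) = ⊤ :=
  eq_top_iff.mpr fun g _ => zero_mul (g : M)

theorem GNilpotentSeries.commutator_natconn_top_le (hc : GNilpotentSeries n c) {i : ℕ}
    (hi : i < n) : ⁅natconn (c i), ⊤⁆ ≤ natconn (c (i + 1)) := by
  obtain ⟨-, -, h_idem, -, h_center⟩ := hc
  obtain ⟨h_succ_idem, h_succ_central⟩ := h_idem (i + 1) hi
  rw [← natconn_zero]
  exact commutator_natconn_le (h_idem i hi.le).1 .zero h_succ_idem h_succ_central
    fun x hx => (h_center i hi hx).2

theorem GNilpotentSeries.isAscendingCentralSeries_natconn (hc : GNilpotentSeries n c) :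
    Subgroup.IsAscendingCentralSeries fun k => natconn (c (n - k)) := by
  have h_zero : c 0 = 0 := hc.1
  have h_last : c n = 1 := hc.2.1
  refine ⟨?_, fun g k hg h => ?_⟩
  · change natconn (c n) = ⊥
    rw [h_last, natconn_one]
  change ⁅g, h⁆ ∈ natconn (c (n - k))
  obtain hnk | hkn := le_or_gt n k
  · rw [Nat.sub_eq_zero_of_le hnk, h_zero, natconn_zero]
    exact Subgroup.mem_top _
  · have h_le := hc.commutator_natconn_top_le (i := n - (k + 1)) (by lia)
    rw [show n - (k + 1) + 1 = n - k by lia] at h_le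
    exact h_le (Subgroup.commutator_mem_commutator hg (Subgroup.mem_top h))

theorem GNilpotentSeries.upperCentralSeries_units_eq_top (hc : GNilpotentSeries n c) :
    Subgroup.upperCentralSeries Mˣ n = ⊤ := by
  have h_zero : c 0 = 0 := hc.1
  have h_le := Subgroup.ascending_central_series_le_upper _ hc.isAscendingCentralSeries_natconn n
  rwa [Nat.sub_self, h_zero, natconn_zero, top_le_iff] at h_le

theorem GSolvableSeries.derivedSeries_units_eq_bot (hc : GSolvableSeries n c) :
    derivedSeries Mˣ n = ⊥ := by
  have h_zero : natconn (c 0) = ⊤ := by rw [hc.1, natconn_zero]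
  have h_last : natconn (c n) = ⊥ := by rw [hc.2.1, natconn_one]
  rw [← le_bot_iff, ← h_last]
  exact derivedSeries_le_of_commutator_le (H := fun i => natconn (c i)) h_zero
    fun _ hi => hc.commutator_natconn_self_le hi

theorem stmt_13_general (M : Type*) [MonoidWithZero M] (n : ℕ) :
    ((∃ c : ℕ → M, GNilpotentSeries n c) → Subgroup.upperCentralSeries Mˣ n = ⊤) ∧
    ((∃ c : ℕ → M, GSolvableSeries n c) → derivedSeries Mˣ n = ⊥) :=
  ⟨fun ⟨_, hc⟩ => hc.upperCentralSeries_units_eq_top,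
    fun ⟨_, hc⟩ => hc.derivedSeries_units_eq_bot⟩

end MonoidWithZero

/-- If `S` is a `G`-nilpotent (resp. `G`-solvable) factorizable inverse
monoid with zero of `G`-nilpotent (resp. `G`-solvable) length `n`, whose natural
connection is a dual isomorphism onto a sublattice of the lattice of subgroups of the
group of units, then the group of units is nilpotent of class at most `n`
(resp. solvable of derived length at most `n`). -/
theorem stmt_13 {S : Type*} [InverseMonoidWithZero S] (hfact : Factorizable S)
    (hθ : NatconnDualIso S) (n : ℕ) :
    ((∃ c : ℕ → S, GNilpotentSeries n c) → (∀ (m : ℕ) (c : ℕ → S), GNilpotentSeries m c → n ≤ m) →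
      upperCentralSeries Sˣ n = ⊤) ∧
    ((∃ c : ℕ → S, GSolvableSeries n c) → (∀ (m : ℕ) (c : ℕ → S), GSolvableSeries m c → n ≤ m) →
      derivedSeries Sˣ n = ⊥) := by
  let _ : MonoidWithZero S := { ‹InverseMonoidWithZero S› with }
  exact ⟨fun hc _ => (stmt_13_general S n).1 hc, fun hc _ => (stmt_13_general S n).2 hc⟩
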